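/- arXiv:2404.03578 — 3 statements merged into one kernel-verified Lean document; each statement's English description precedes it below -/
import Mathlib

section
/- (Robust Bellman optimality equation.) In an S×A-rectangular RMDP, the optimal robust value functions satisfy, for every (s,a,h) ∈ S×A×{1,…,H}: V*_h(s) = max_{a∈A} Q*_h(s,a) and Q*_h(s,a) = R_h(s,a) + inf_{P̃ ∈ 𝒫(s,a;P_h)} E_{P̃}[V*_{h+1}], with V*_{H+1} ≡ 0. Moreover, any deterministic Markov policy π* with π*_h(s) ∈ argmax_{a∈A} Q*_h(s,a) for every (s,h) is an optimal robust policy: V^{π*}_h(s) = V*_h(s) and Q^{π*}_h(s,a) = Q*_h(s,a) for all (s,a,h). -/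
/-!
For a fixed policy `π`, S×A-rectangularity lets the adversary choose its kernel separately at each
`(h, s, a)`, so the robust values obey the backward recursion
`V_h(s) = ∑ a, π_h(a|s) * (R_h(s,a) + inf_p E_p[V_{h+1}])`. Here `polV` denotes the solution of that
recursion. It bounds every `kerV` from below (`polV_le_kerV`), and since the infima need not be
attained, the converse takes kernels that are `ε`-optimal at each `(h, s, a)`: their errors add up to
at most `(H + 1 - h) * ε` (`exists_kerV_le`). Hence `robV = polV` (`robV_eq`), and `robQ` is one
robust Bellman step applied to the next `polV` (`robQ_eq`).

The solution `belV` of the optimality recursion dominates `polV` for every policy (`polV_le_belV`),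
because a convex combination of the one-step values is at most their maximum, and equals it for
a policy that is greedy with respect to `belV` (`polV_greedy`). As the same greedy policy is optimal
at all states and steps simultaneously, `optV = belV`, and `optQ` is one robust Bellman step applied
to `belV`. A policy that is greedy with respect to `optQ` is therefore greedy with respect to `belV`.
-/

open Finset

section RMDPDefs

variable {S A : Type*} [Fintype S] [Fintype A]

/-- `p` is a probability distribution on the finite set `S`. -/
def IsDist (p : S → ℝ) : Prop := (∀ s, 0 ≤ p s) ∧ ∑ s, p s = 1

/-- Expectation of `f` under `p`. -/
def Eexp (p f : S → ℝ) : ℝ := ∑ s, p s * f s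

/-- Total-variation distance between `p` and `q` (no absolute continuity assumed). -/
noncomputable def TV (p q : S → ℝ) : ℝ := (∑ s, |p s - q s|) / 2

/-- Value function `V^{π,P̃}_h` of a Markov policy `π` under the kernel collection `Pk`,
defined by the backward recursion `V_{H+1} ≡ 0`,
`V_h(s) = ∑_a π_h(a|s) (R_h(s,a) + E_{P̃_h(·|s,a)}[V_{h+1}])`. -/
noncomputable def kerV (H : ℕ) (R : ℕ → S → A → ℝ) (Pk : ℕ → S → A → S → ℝ)
    (π : ℕ → S → A → ℝ) (h : ℕ) : S → ℝ := fun s =>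
  if _hle : H + 1 ≤ h then 0
  else ∑ a : A, π h s a * (R h s a + Eexp (Pk h s a) (kerV H R Pk π (h + 1)))
termination_by H + 1 - h
decreasing_by omega

/-- State-action value function `Q^{π,P̃}_h` of `π` under the kernel collection `Pk`. -/
noncomputable def kerQ (H : ℕ) (R : ℕ → S → A → ℝ) (Pk : ℕ → S → A → S → ℝ)
    (π : ℕ → S → A → ℝ) (h : ℕ) (s : S) (a : A) : ℝ :=
  R h s a + Eexp (Pk h s a) (kerV H R Pk π (h + 1))

/-- A kernel collection is admissible if each of its kernels lies in the corresponding
robust set (S×A-rectangularity). -/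
def Admissible (H : ℕ) (Rob : ℕ → S → A → Set (S → ℝ))
    (Pk : ℕ → S → A → S → ℝ) : Prop :=
  ∀ h s a, 1 ≤ h → h ≤ H → Pk h s a ∈ Rob h s a

/-- Robust value function `V^π_h(s)`: infimum over admissible kernel collections. -/
noncomputable def robV (H : ℕ) (R : ℕ → S → A → ℝ) (Rob : ℕ → S → A → Set (S → ℝ))
    (π : ℕ → S → A → ℝ) (h : ℕ) (s : S) : ℝ :=
  sInf {x : ℝ | ∃ Pk : ℕ → S → A → S → ℝ, Admissible H Rob Pk ∧ x = kerV H R Pk π h s}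

/-- Robust state-action value function `Q^π_h(s,a)`. -/
noncomputable def robQ (H : ℕ) (R : ℕ → S → A → ℝ) (Rob : ℕ → S → A → Set (S → ℝ))
    (π : ℕ → S → A → ℝ) (h : ℕ) (s : S) (a : A) : ℝ :=
  sInf {x : ℝ | ∃ Pk : ℕ → S → A → S → ℝ, Admissible H Rob Pk ∧ x = kerQ H R Pk π h s a}

/-- `π` is a Markov policy for horizon `H`. -/
def IsPolicy (H : ℕ) (π : ℕ → S → A → ℝ) : Prop :=
  ∀ h s, 1 ≤ h → h ≤ H → IsDist (π h s)

/-- Optimal robust value function `V*_h(s) = sup_π V^π_h(s)`. -/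
noncomputable def optV (H : ℕ) (R : ℕ → S → A → ℝ) (Rob : ℕ → S → A → Set (S → ℝ))
    (h : ℕ) (s : S) : ℝ :=
  sSup {x : ℝ | ∃ π : ℕ → S → A → ℝ, IsPolicy H π ∧ x = robV H R Rob π h s}

/-- Optimal robust state-action value function `Q*_h(s,a) = sup_π Q^π_h(s,a)`. -/
noncomputable def optQ (H : ℕ) (R : ℕ → S → A → ℝ) (Rob : ℕ → S → A → Set (S → ℝ))
    (h : ℕ) (s : S) (a : A) : ℝ :=
  sSup {x : ℝ | ∃ π : ℕ → S → A → ℝ, IsPolicy H π ∧ x = robQ H R Rob π h s a}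

/-- The total-variation robust sets `𝒫_ρ(s,a;P_h)` of radius `ρ` around the nominal
kernels `P`. -/
def TVset (ρ : ℝ) (P : ℕ → S → A → S → ℝ) : ℕ → S → A → Set (S → ℝ) :=
  fun h s a => {Pt : S → ℝ | IsDist Pt ∧ TV Pt (P h s a) ≤ ρ}

open Classical in
/-- The Markov policy induced by a deterministic policy. -/
noncomputable def detPol (πd : ℕ → S → A) : ℕ → S → A → ℝ :=
  fun h s a => if a = πd h s then 1 else 0

end RMDPDefs

section RobustBellman

set_option linter.unusedSectionVars false

variable {S A : Type*} [Fintype S] [Fintype A]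

/-! ### Expectations and the robust Bellman step -/

lemma Eexp_mono {p f g : S → ℝ} (hp : IsDist p) (hfg : ∀ s, f s ≤ g s) :
    Eexp p f ≤ Eexp p g :=
  Finset.sum_le_sum fun s _ => mul_le_mul_of_nonneg_left (hfg s) (hp.1 s)

lemma Eexp_add_const {p : S → ℝ} (hp : IsDist p) (f : S → ℝ) (c : ℝ) :
    Eexp p (fun s => f s + c) = Eexp p f + c := by
  simp only [Eexp, mul_add, Finset.sum_add_distrib, ← Finset.sum_mul, hp.2, one_mul]

lemma Eexp_const {p : S → ℝ} (hp : IsDist p) (c : ℝ) : Eexp p (fun _ => c) = c := by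
  simp only [Eexp, ← Finset.sum_mul, hp.2, one_mul]

/-- One robust Bellman step at `(h, s, a)` with continuation value `f`:
`R_h(s,a) + inf_{p ∈ 𝒫(s,a;P_h)} E_p[f]`. -/
noncomputable def bell (R : ℕ → S → A → ℝ) (Rob : ℕ → S → A → Set (S → ℝ))
    (h : ℕ) (s : S) (a : A) (f : S → ℝ) : ℝ :=
  R h s a + sInf {x : ℝ | ∃ Pt ∈ Rob h s a, x = Eexp Pt f}

/-- Solution of the robust Bellman recursion of the policy `π`, with value `0` after step `H`. -/
noncomputable def polV (H : ℕ) (R : ℕ → S → A → ℝ) (Rob : ℕ → S → A → Set (S → ℝ))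
    (π : ℕ → S → A → ℝ) (h : ℕ) : S → ℝ := fun s =>
  if _hle : H + 1 ≤ h then 0
  else ∑ a : A, π h s a * bell R Rob h s a (polV H R Rob π (h + 1))
termination_by H + 1 - h
decreasing_by omega

/-- Solution of the robust Bellman optimality recursion, with value `0` after step `H`. -/
noncomputable def belV (H : ℕ) (R : ℕ → S → A → ℝ) (Rob : ℕ → S → A → Set (S → ℝ))
    (h : ℕ) : S → ℝ := fun s =>
  if _hle : H + 1 ≤ h then 0
  else ⨆ a : A, bell R Rob h s a (belV H R Rob (h + 1))
termination_by H + 1 - h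
decreasing_by omega

variable {H : ℕ} {R : ℕ → S → A → ℝ} {Rob : ℕ → S → A → Set (S → ℝ)}

lemma kerV_succ_horizon (Pk : ℕ → S → A → S → ℝ) (π : ℕ → S → A → ℝ) (s : S) :
    kerV H R Pk π (H + 1) s = 0 := by
  rw [kerV]; simp

lemma polV_succ_horizon (π : ℕ → S → A → ℝ) (s : S) : polV H R Rob π (H + 1) s = 0 := by
  rw [polV]; simp

lemma belV_succ_horizon (s : S) : belV H R Rob (H + 1) s = 0 := by
  rw [belV]; simp

lemma kerV_of_le {h : ℕ} (hh : h ≤ H) (Pk : ℕ → S → A → S → ℝ) (π : ℕ → S → A → ℝ) (s : S) :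
    kerV H R Pk π h s
      = ∑ a : A, π h s a * (R h s a + Eexp (Pk h s a) (kerV H R Pk π (h + 1))) := by
  rw [kerV, dif_neg (by omega)]

lemma polV_of_le {h : ℕ} (hh : h ≤ H) (π : ℕ → S → A → ℝ) (s : S) :
    polV H R Rob π h s = ∑ a : A, π h s a * bell R Rob h s a (polV H R Rob π (h + 1)) := by
  rw [polV, dif_neg (by omega)]

lemma belV_of_le {h : ℕ} (hh : h ≤ H) (s : S) :
    belV H R Rob h s = ⨆ a : A, bell R Rob h s a (belV H R Rob (h + 1)) := by
  rw [belV, dif_neg (by omega)]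

/-- Backward induction over the steps `H + 1, H, …, 1`. -/
lemma backward_induction {motive : ℕ → Prop} (last : motive (H + 1))
    (step : ∀ h, 1 ≤ h → h ≤ H → motive (h + 1) → motive h) :
    ∀ h, 1 ≤ h → h ≤ H + 1 → motive h := by
  intro h h1 h2
  induction h2 using Nat.decreasingInduction with
  | self => exact last
  | of_succ k hk ih => exact step k h1 (by omega) (ih (by omega))

lemma bell_le {h : ℕ} {s : S} {a : A} (hD : ∀ p ∈ Rob h s a, IsDist p) (f : S → ℝ)
    {p : S → ℝ} (hp : p ∈ Rob h s a) : bell R Rob h s a f ≤ R h s a + Eexp p f := by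
  suffices hbdd : BddBelow {x : ℝ | ∃ Pt ∈ Rob h s a, x = Eexp Pt f} by
    unfold bell
    linarith [csInf_le hbdd ⟨p, hp, rfl⟩]
  refine ⟨-∑ s, |f s|, ?_⟩
  rintro x ⟨q, hq, rfl⟩
  rw [← Eexp_const (hD q hq) (-∑ s, |f s|)]
  refine Eexp_mono (hD q hq) fun t => ?_
  have := Finset.single_le_sum (fun i _ => abs_nonneg (f i)) (Finset.mem_univ t)
  linarith [neg_abs_le (f t)]

lemma exists_le_bell_add {h : ℕ} {s : S} {a : A} (hne : (Rob h s a).Nonempty) (f : S → ℝ)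
    {ε : ℝ} (hε : 0 < ε) :
    ∃ p ∈ Rob h s a, R h s a + Eexp p f ≤ bell R Rob h s a f + ε := by
  obtain ⟨q, hq⟩ := hne
  obtain ⟨_, ⟨p, hp, rfl⟩, hlt⟩ :=
    Real.lt_sInf_add_pos (s := {x : ℝ | ∃ Pt ∈ Rob h s a, x = Eexp Pt f}) ⟨_, q, hq, rfl⟩ hε
  exact ⟨p, hp, by unfold bell; linarith⟩

lemma bell_mono {h : ℕ} {s : S} {a : A} (hne : (Rob h s a).Nonempty)
    (hD : ∀ p ∈ Rob h s a, IsDist p) {f g : S → ℝ} (hfg : ∀ s, f s ≤ g s) :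
    bell R Rob h s a f ≤ bell R Rob h s a g := by
  refine le_of_forall_pos_le_add fun ε hε => ?_
  obtain ⟨p, hp, hle⟩ := exists_le_bell_add (R := R) hne g hε
  linarith [bell_le (R := R) hD f hp, Eexp_mono (hD p hp) hfg]

lemma exists_admissible (hNE : ∀ h s a, 1 ≤ h → h ≤ H → (Rob h s a).Nonempty) :
    ∃ Pk, Admissible H Rob Pk := by
  choose! P hP using hNE
  exact ⟨P, hP⟩

/-! ### Robust policy evaluation -/

lemma polV_le_kerV (hD : ∀ h s a, 1 ≤ h → h ≤ H → ∀ p ∈ Rob h s a, IsDist p)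
    {π : ℕ → S → A → ℝ} (hπ : IsPolicy H π) {Pk : ℕ → S → A → S → ℝ}
    (hPk : Admissible H Rob Pk) :
    ∀ h, 1 ≤ h → h ≤ H + 1 → ∀ s, polV H R Rob π h s ≤ kerV H R Pk π h s := by
  refine backward_induction (fun s => ?_) fun h h1 h2 ih s => ?_
  · rw [kerV_succ_horizon, polV_succ_horizon]
  · rw [kerV_of_le h2, polV_of_le h2]
    refine Finset.sum_le_sum fun a _ => mul_le_mul_of_nonneg_left ?_ ((hπ h s h1 h2).1 a)
    have hmem := hPk h s a h1 h2
    linarith [bell_le (R := R) (hD h s a h1 h2) (polV H R Rob π (h + 1)) hmem,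
      Eexp_mono (hD h s a h1 h2 _ hmem) ih]

/-- Rectangularity: one admissible kernel collection, assembled from `ε`-optimal kernels at each
`(h, s, a)`, nearly attains `polV` at all steps and states simultaneously. -/
lemma exists_kerV_le (hNE : ∀ h s a, 1 ≤ h → h ≤ H → (Rob h s a).Nonempty)
    (hD : ∀ h s a, 1 ≤ h → h ≤ H → ∀ p ∈ Rob h s a, IsDist p)
    {π : ℕ → S → A → ℝ} (hπ : IsPolicy H π) {ε : ℝ} (hε : 0 < ε) :
    ∃ Pk, Admissible H Rob Pk ∧
      (∀ h s a, 1 ≤ h → h ≤ H → R h s a + Eexp (Pk h s a) (polV H R Rob π (h + 1))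
        ≤ bell R Rob h s a (polV H R Rob π (h + 1)) + ε) ∧
      ∀ h, 1 ≤ h → h ≤ H + 1 → ∀ s,
        kerV H R Pk π h s ≤ polV H R Rob π h s + ((H : ℝ) + 1 - h) * ε := by
  have key : ∀ h s a, 1 ≤ h → h ≤ H → ∃ p ∈ Rob h s a,
      R h s a + Eexp p (polV H R Rob π (h + 1))
        ≤ bell R Rob h s a (polV H R Rob π (h + 1)) + ε :=
    fun h s a h1 h2 => exists_le_bell_add (hNE h s a h1 h2) _ hε
  choose! P hP hle using key
  refine ⟨P, hP, hle, backward_induction (fun s => ?_) fun h h1 h2 ih s => ?_⟩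
  · rw [kerV_succ_horizon, polV_succ_horizon]
    push_cast
    simp
  · rw [kerV_of_le h2, polV_of_le h2]
    have hc : ((H : ℝ) + 1 - h) * ε = ∑ a : A, π h s a * (((H : ℝ) + 1 - h) * ε) := by
      rw [← Finset.sum_mul, (hπ h s h1 h2).2, one_mul]
    rw [hc, ← Finset.sum_add_distrib]
    refine Finset.sum_le_sum fun a _ => ?_
    rw [← mul_add]
    refine mul_le_mul_of_nonneg_left ?_ ((hπ h s h1 h2).1 a)
    have hdist := hD h s a h1 h2 _ (hP h s a h1 h2)
    have hE := Eexp_mono hdist ih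
    rw [Eexp_add_const hdist] at hE
    push_cast at hE
    linarith [hle h s a h1 h2]

lemma robV_eq (hNE : ∀ h s a, 1 ≤ h → h ≤ H → (Rob h s a).Nonempty)
    (hD : ∀ h s a, 1 ≤ h → h ≤ H → ∀ p ∈ Rob h s a, IsDist p)
    {π : ℕ → S → A → ℝ} (hπ : IsPolicy H π) {h : ℕ} (h1 : 1 ≤ h) (h2 : h ≤ H + 1) (s : S) :
    robV H R Rob π h s = polV H R Rob π h s := by
  have hlow : ∀ x ∈ {x : ℝ | ∃ Pk : ℕ → S → A → S → ℝ,
      Admissible H Rob Pk ∧ x = kerV H R Pk π h s}, polV H R Rob π h s ≤ x := by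
    rintro x ⟨Pk, hPk, rfl⟩
    exact polV_le_kerV hD hπ hPk h h1 h2 s
  refine le_antisymm (le_of_forall_pos_le_add fun ε hε => ?_) ?_
  · -- The accumulated error factor `H + 1 - h` is at most `H + 1`.
    have hH : (0 : ℝ) < H + 1 := by positivity
    obtain ⟨Pk, hPk, -, hle⟩ := exists_kerV_le (R := R) hNE hD hπ (div_pos hε hH)
    refine (csInf_le ⟨_, hlow⟩ ⟨Pk, hPk, rfl⟩).trans ((hle h h1 h2 s).trans ?_)
    have : ((H : ℝ) + 1 - h) * (ε / (H + 1)) ≤ (H + 1) * (ε / (H + 1)) :=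
      mul_le_mul_of_nonneg_right (by linarith [(Nat.cast_nonneg h : (0 : ℝ) ≤ h)])
        (div_pos hε hH).le
    rw [mul_div_cancel₀ _ hH.ne'] at this
    linarith
  · obtain ⟨Pk, hPk⟩ := exists_admissible hNE
    exact le_csInf ⟨_, Pk, hPk, rfl⟩ hlow

lemma robQ_eq (hNE : ∀ h s a, 1 ≤ h → h ≤ H → (Rob h s a).Nonempty)
    (hD : ∀ h s a, 1 ≤ h → h ≤ H → ∀ p ∈ Rob h s a, IsDist p)
    {π : ℕ → S → A → ℝ} (hπ : IsPolicy H π) {h : ℕ} (h1 : 1 ≤ h) (h2 : h ≤ H) (s : S) (a : A) :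
    robQ H R Rob π h s a = bell R Rob h s a (polV H R Rob π (h + 1)) := by
  have hlow : ∀ x ∈ {x : ℝ | ∃ Pk : ℕ → S → A → S → ℝ,
      Admissible H Rob Pk ∧ x = kerQ H R Pk π h s a},
      bell R Rob h s a (polV H R Rob π (h + 1)) ≤ x := by
    rintro x ⟨Pk, hPk, rfl⟩
    have hmem := hPk h s a h1 h2
    have hE := Eexp_mono (hD h s a h1 h2 _ hmem)
      (polV_le_kerV (R := R) hD hπ hPk (h + 1) (by omega) (by omega))
    unfold kerQ
    linarith [bell_le (R := R) (hD h s a h1 h2) (polV H R Rob π (h + 1)) hmem]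
  refine le_antisymm (le_of_forall_pos_le_add fun ε hε => ?_) ?_
  · have hH : (0 : ℝ) < H + 1 := by positivity
    obtain ⟨Pk, hPk, hstep, hle⟩ := exists_kerV_le (R := R) hNE hD hπ (div_pos hε hH)
    refine (csInf_le ⟨_, hlow⟩ ⟨Pk, hPk, rfl⟩).trans ?_
    have hdist := hD h s a h1 h2 _ (hPk h s a h1 h2)
    have hE := Eexp_mono hdist (hle (h + 1) (by omega) (by omega))
    rw [Eexp_add_const hdist] at hE
    push_cast at hE
    -- One error from step `h` itself plus `H - h` errors from the later steps.
    have : ((H : ℝ) + 1 - h) * (ε / (H + 1)) ≤ (H + 1) * (ε / (H + 1)) :=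
      mul_le_mul_of_nonneg_right (by linarith [(Nat.cast_nonneg h : (0 : ℝ) ≤ h)])
        (div_pos hε hH).le
    rw [mul_div_cancel₀ _ hH.ne'] at this
    unfold kerQ
    linarith [hstep h s a h1 h2]
  · obtain ⟨Pk, hPk⟩ := exists_admissible hNE
    exact le_csInf ⟨_, Pk, hPk, rfl⟩ hlow

/-! ### Optimality and greedy policies -/

lemma polV_le_belV (hNE : ∀ h s a, 1 ≤ h → h ≤ H → (Rob h s a).Nonempty)
    (hD : ∀ h s a, 1 ≤ h → h ≤ H → ∀ p ∈ Rob h s a, IsDist p)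
    {π : ℕ → S → A → ℝ} (hπ : IsPolicy H π) :
    ∀ h, 1 ≤ h → h ≤ H + 1 → ∀ s, polV H R Rob π h s ≤ belV H R Rob h s := by
  refine backward_induction (fun s => ?_) fun h h1 h2 ih s => ?_
  · rw [polV_succ_horizon, belV_succ_horizon]
  · rw [polV_of_le h2, belV_of_le h2]
    rw [← Eexp_const (hπ h s h1 h2) (⨆ a : A, bell R Rob h s a (belV H R Rob (h + 1)))]
    exact Eexp_mono (hπ h s h1 h2) fun a =>
      (bell_mono (hNE h s a h1 h2) (hD h s a h1 h2) ih).trans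
        (le_ciSup (f := fun a => bell R Rob h s a (belV H R Rob (h + 1)))
          (Set.finite_range _).bddAbove a)

lemma isPolicy_detPol (πd : ℕ → S → A) : IsPolicy H (detPol πd) := by
  classical
  intro h s _ _
  refine ⟨fun a => ?_, ?_⟩
  · unfold detPol; split_ifs <;> norm_num
  · simp only [detPol]
    rw [Finset.sum_ite_eq' Finset.univ (πd h s) fun _ => (1 : ℝ)]
    simp

lemma polV_greedy {πd : ℕ → S → A}
    (hg : ∀ h s, 1 ≤ h → h ≤ H → ∀ a, bell R Rob h s a (belV H R Rob (h + 1))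
      ≤ bell R Rob h s (πd h s) (belV H R Rob (h + 1))) :
    ∀ h, 1 ≤ h → h ≤ H + 1 → polV H R Rob (detPol πd) h = belV H R Rob h := by
  refine backward_induction (funext fun s => ?_) fun h h1 h2 ih => funext fun s => ?_
  · rw [polV_succ_horizon, belV_succ_horizon]
  · rw [polV_of_le h2, belV_of_le h2, ih]
    have : Nonempty A := ⟨πd h s⟩
    have hsum : ∑ a, detPol πd h s a * bell R Rob h s a (belV H R Rob (h + 1))
        = bell R Rob h s (πd h s) (belV H R Rob (h + 1)) := by
      rw [Finset.sum_eq_single (πd h s) (fun a _ ha => by simp [detPol, ha]) (by simp)]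
      simp [detPol]
    rw [hsum]
    exact le_antisymm
      (le_ciSup (f := fun a => bell R Rob h s a (belV H R Rob (h + 1)))
        (Set.finite_range _).bddAbove _) (ciSup_le (hg h s h1 h2))

lemma exists_greedy [Nonempty A] :
    ∃ πd : ℕ → S → A, ∀ h s, 1 ≤ h → h ≤ H → ∀ a, bell R Rob h s a (belV H R Rob (h + 1))
      ≤ bell R Rob h s (πd h s) (belV H R Rob (h + 1)) := by
  choose πd hπd using fun (h : ℕ) (s : S) =>
    Finite.exists_max fun a => bell R Rob h s a (belV H R Rob (h + 1))
  exact ⟨πd, fun h s _ _ => hπd h s⟩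

lemma optV_eq [Nonempty A] (hNE : ∀ h s a, 1 ≤ h → h ≤ H → (Rob h s a).Nonempty)
    (hD : ∀ h s a, 1 ≤ h → h ≤ H → ∀ p ∈ Rob h s a, IsDist p)
    {h : ℕ} (h1 : 1 ≤ h) (h2 : h ≤ H + 1) : optV H R Rob h = belV H R Rob h := by
  funext s
  obtain ⟨πd, hg⟩ := exists_greedy (H := H) (R := R) (Rob := Rob)
  refine IsGreatest.csSup_eq ⟨⟨detPol πd, isPolicy_detPol πd, ?_⟩, ?_⟩
  · rw [robV_eq hNE hD (isPolicy_detPol πd) h1 h2, polV_greedy hg h h1 h2]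
  · rintro x ⟨π, hπ, rfl⟩
    rw [robV_eq hNE hD hπ h1 h2]
    exact polV_le_belV hNE hD hπ h h1 h2 s

lemma optQ_eq [Nonempty A] (hNE : ∀ h s a, 1 ≤ h → h ≤ H → (Rob h s a).Nonempty)
    (hD : ∀ h s a, 1 ≤ h → h ≤ H → ∀ p ∈ Rob h s a, IsDist p)
    {h : ℕ} (h1 : 1 ≤ h) (h2 : h ≤ H) (s : S) (a : A) :
    optQ H R Rob h s a = bell R Rob h s a (belV H R Rob (h + 1)) := by
  obtain ⟨πd, hg⟩ := exists_greedy (H := H) (R := R) (Rob := Rob)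
  refine IsGreatest.csSup_eq ⟨⟨detPol πd, isPolicy_detPol πd, ?_⟩, ?_⟩
  · rw [robQ_eq hNE hD (isPolicy_detPol πd) h1 h2, polV_greedy hg (h + 1) (by omega) (by omega)]
  · rintro x ⟨π, hπ, rfl⟩
    rw [robQ_eq hNE hD hπ h1 h2]
    exact bell_mono (hNE h s a h1 h2) (hD h s a h1 h2)
      (polV_le_belV hNE hD hπ (h + 1) (by omega) (by omega))

end RobustBellman

/-- **Robust Bellman optimality equation.** In an S×A-rectangular RMDP, for every
`(s,a,h) ∈ S×A×{1,…,H}`: `V*_h(s) = max_a Q*_h(s,a)` and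
`Q*_h(s,a) = R_h(s,a) + inf_{P̃ ∈ 𝒫(s,a;P_h)} E_{P̃}[V*_{h+1}]`. Moreover, any deterministic
policy `π*` that is greedy with respect to `Q*` is an optimal robust policy:
`V^{π*}_h = V*_h` and `Q^{π*}_h = Q*_h`. -/
theorem robust_bellman_optimality {S A : Type*} [Fintype S] [Fintype A] [Nonempty S] [Nonempty A]
    (H : ℕ) (hH : 1 ≤ H)
    (R : ℕ → S → A → ℝ) (hR : ∀ h s a, 1 ≤ h → h ≤ H → 0 ≤ R h s a ∧ R h s a ≤ 1)
    (Rob : ℕ → S → A → Set (S → ℝ))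
    (hRobNE : ∀ h s a, 1 ≤ h → h ≤ H → (Rob h s a).Nonempty)
    (hRobDist : ∀ h s a, 1 ≤ h → h ≤ H → ∀ p ∈ Rob h s a, IsDist p)
    (πstar : ℕ → S → A)
    (hπstar : ∀ h s, 1 ≤ h → h ≤ H → ∀ a : A,
      optQ H R Rob h s a ≤ optQ H R Rob h s (πstar h s)) :
    ∀ h, 1 ≤ h → h ≤ H → ∀ (s : S) (a : A),
      optV H R Rob h s = (⨆ a' : A, optQ H R Rob h s a') ∧
      optQ H R Rob h s a
        = R h s a + sInf {x : ℝ | ∃ Pt ∈ Rob h s a, x = Eexp Pt (optV H R Rob (h + 1))} ∧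
      robV H R Rob (detPol πstar) h s = optV H R Rob h s ∧
      robQ H R Rob (detPol πstar) h s a = optQ H R Rob h s a := by
  have hg : ∀ h s, 1 ≤ h → h ≤ H → ∀ a, bell R Rob h s a (belV H R Rob (h + 1))
      ≤ bell R Rob h s (πstar h s) (belV H R Rob (h + 1)) := by
    intro h s h1 h2 a
    rw [← optQ_eq hRobNE hRobDist h1 h2, ← optQ_eq hRobNE hRobDist h1 h2]
    exact hπstar h s h1 h2 a
  have hpol := isPolicy_detPol (H := H) πstar
  intro h h1 h2 s a
  refine ⟨?_, ?_, ?_, ?_⟩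
  · simp only [optQ_eq hRobNE hRobDist h1 h2]
    rw [optV_eq hRobNE hRobDist h1 (by omega), belV_of_le h2]
  · rw [optQ_eq hRobNE hRobDist h1 h2, optV_eq hRobNE hRobDist (by omega) (by omega), bell]
  · rw [robV_eq hRobNE hRobDist hpol h1 (by omega), polV_greedy hg h h1 (by omega),
      optV_eq hRobNE hRobDist h1 (by omega)]
  · rw [robQ_eq hRobNE hRobDist hpol h1 h2, polV_greedy hg (h + 1) (by omega) (by omega),
      optQ_eq hRobNE hRobDist h1 h2]
end

section
/- (Deterministic core of the hardness result.) Consider the pair of RMDPs {M_0, M_1} from the hard example, with 0 < q < p < 1 and TV robust sets of radius ρ ∈ [0, q]. Then for every K ≥ 1 and every sequence of Markov policies π¹, …, π^K, max over θ ∈ {0,1} of ∑_{k=1}^K ( V*_{1,M_θ}(s_good) − V^{π^k}_{1,M_θ}(s_good) ) ≥ ρ·(p−q)·K/2, where V*_{1,M_θ} and V^{π^k}_{1,M_θ} denote the optimal robust value function and the robust value function of π^k in the instance M_θ. In particular, any fixed sequence of K policies incurs worst-case (over the two indistinguishable instances) cumulative robust suboptimality at least ρ(p−q)K/2. -/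
/-! In `M_θ` the worst kernels move as much mass as the TV budget allows from the good to the bad
state, since the good state always has the larger continuation value. So the robust value at the
good state of a policy playing `θ` with probability `x` at step 2 in the bad state is exactly
`hardVal p q ρ x = 1 + (1 - ρ) (2 - ρ) + ρ (x p + (1 - x) q - ρ)` (`robV_hard`). The optimal value
is attained at `x = 1`, so a policy loses `ρ (p - q) (1 - x)`. As a policy's probabilities of
playing `0` and `1` add up to one, its losses in the two instances add up to `ρ (p - q)`; hence one
of the two cumulative losses is at least `ρ (p - q) K / 2`. -/

open Finset

/-- Rewards of the hard example: `1` at the good state (`true`), `0` at the bad state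
(`false`), at every step and action. -/
noncomputable def hardR : ℕ → Bool → Bool → ℝ := fun _ s _ => if s = true then 1 else 0

/-- Nominal kernels of the hard example `M_θ`: the good state is absorbing, the bad state
is absorbing at step 1, and at step 2 the bad state transits to the good state with
probability `p` when `a = θ` and with probability `q` when `a = 1 - θ`. -/
noncomputable def hardP (θ : Bool) (p q : ℝ) : ℕ → Bool → Bool → Bool → ℝ :=
  fun h s a s' =>
    if h = 2 ∧ s = false then
      (if a = θ then (if s' = true then p else 1 - p)
       else (if s' = true then q else 1 - q))
    else if s' = s then 1 else 0

/-- Robust value at the good state of a policy that plays the better action `θ` with probability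
`x` at step 2 in the bad state. -/
noncomputable def hardVal (p q ρ x : ℝ) : ℝ :=
  1 + (1 - ρ) * (2 - ρ) + ρ * (x * p + (1 - x) * q - ρ)

/-- Probability of moving to the good state under the worst-case kernel of `M_θ`: the nominal one
lowered by `ρ`, except in the bad state at steps other than 2, where it is already `0`. -/
noncomputable def worstProb (θ : Bool) (p q ρ : ℝ) (h : ℕ) (s a : Bool) : ℝ :=
  hardP θ p q h s a true - if s = true ∨ h = 2 then ρ else 0

/-- The worst-case kernel collection of `M_θ`. -/
noncomputable def worstP (θ : Bool) (p q ρ : ℝ) : ℕ → Bool → Bool → Bool → ℝ :=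
  fun h s a s' => if s' = true then worstProb θ p q ρ h s a else 1 - worstProb θ p q ρ h s a

lemma kerV_hard_three (Pk : ℕ → Bool → Bool → Bool → ℝ) (π : ℕ → Bool → Bool → ℝ)
    (hπ : IsPolicy 3 π) (s : Bool) : kerV 3 hardR Pk π 3 s = if s = true then 1 else 0 := by
  have h4 : kerV 3 hardR Pk π (3 + 1) = fun _ => 0 := by
    funext t; rw [kerV]; simp
  have h3 := (hπ 3 s (by norm_num) le_rfl).2
  rw [kerV, h4]
  simp only [Fintype.sum_bool] at h3
  cases s <;> simp [Eexp, hardR, h3]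

lemma kerV_hard_two (Pk : ℕ → Bool → Bool → Bool → ℝ) (π : ℕ → Bool → Bool → ℝ)
    (hπ : IsPolicy 3 π) (s : Bool) :
    kerV 3 hardR Pk π 2 s = (if s = true then 1 else 0)
      + (π 2 s true * Pk 2 s true true + π 2 s false * Pk 2 s false true) := by
  have h2 := (hπ 2 s (by norm_num) (by norm_num)).2
  rw [kerV]
  simp only [Fintype.sum_bool] at h2
  simp only [Eexp, hardR, Fintype.sum_bool, Nat.reduceAdd, kerV_hard_three Pk π hπ]
  cases s <;> simp <;> linear_combination h2

lemma kerV_hard_one (Pk : ℕ → Bool → Bool → Bool → ℝ) (π : ℕ → Bool → Bool → ℝ)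
    (hπ : IsPolicy 3 π) :
    kerV 3 hardR Pk π 1 true = 1 + (π 1 true true * Eexp (Pk 1 true true) (kerV 3 hardR Pk π 2)
      + π 1 true false * Eexp (Pk 1 true false) (kerV 3 hardR Pk π 2)) := by
  have h1 := (hπ 1 true (by norm_num) (by norm_num)).2
  rw [kerV]
  simp only [Fintype.sum_bool] at h1
  simp [hardR]
  linear_combination h1

/-- A member of the TV ball gives the good state at most `ρ` less than the nominal kernel. -/
lemma TVset_hard_bounds {θ : Bool} {p q ρ : ℝ} {h : ℕ} {s a : Bool} {Pt : Bool → ℝ}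
    (hPt : Pt ∈ TVset ρ (hardP θ p q) h s a) :
    hardP θ p q h s a true - ρ ≤ Pt true ∧ Pt true ≤ 1 ∧ Pt false = 1 - Pt true := by
  obtain ⟨⟨h0, h1⟩, h2⟩ := hPt
  simp only [TV, Fintype.sum_bool] at h1 h2
  have hs : hardP θ p q h s a true + hardP θ p q h s a false = 1 := by
    unfold hardP; cases s <;> split_ifs <;> simp_all
  have e : Pt false - hardP θ p q h s a false = -(Pt true - hardP θ p q h s a true) := by linarith
  rw [e, abs_neg] at h2
  have := neg_abs_le (Pt true - hardP θ p q h s a true)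
  have := h0 false
  refine ⟨?_, ?_, ?_⟩ <;> linarith

lemma worstP_admissible (θ : Bool) {p q ρ : ℝ} (hqp : q < p) (hp1 : p < 1)
    (hρ0 : 0 ≤ ρ) (hρq : ρ ≤ q) :
    Admissible 3 (TVset ρ (hardP θ p q)) (worstP θ p q ρ) := by
  intro h s a _ _
  have hw : 0 ≤ worstProb θ p q ρ h s a ∧ worstProb θ p q ρ h s a ≤ 1 := by
    unfold worstProb hardP
    cases s <;> split_ifs <;> simp_all <;> (try constructor) <;> linarith
  have hs : hardP θ p q h s a false = 1 - hardP θ p q h s a true := by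
    unfold hardP; cases s <;> split_ifs <;> simp_all
  refine ⟨⟨fun s' => ?_, ?_⟩, ?_⟩
  · cases s' <;> simp [worstP, hw]
  · simp [worstP]
  · have e : 1 - worstProb θ p q ρ h s a - (1 - hardP θ p q h s a true)
        = -(worstProb θ p q ρ h s a - hardP θ p q h s a true) := by ring
    have hb : |worstProb θ p q ρ h s a - hardP θ p q h s a true| ≤ ρ := by
      unfold worstProb
      split_ifs <;> simp [abs_of_nonneg hρ0, hρ0]
    simp only [TV, Fintype.sum_bool, worstP, hs, if_true, Bool.false_eq_true, if_false, e, abs_neg]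
    linarith

lemma kerV_worstP (θ : Bool) (p q ρ : ℝ) (π : ℕ → Bool → Bool → ℝ) (hπ : IsPolicy 3 π) :
    kerV 3 hardR (worstP θ p q ρ) π 1 true = hardVal p q ρ (π 2 false θ) := by
  have h1 := (hπ 1 true (by norm_num) (by norm_num)).2
  have h2 := (hπ 2 true (by norm_num) (by norm_num)).2
  have h3 := (hπ 2 false (by norm_num) (by norm_num)).2
  simp only [Fintype.sum_bool] at h1 h2 h3
  rw [kerV_hard_one _ _ hπ]
  simp only [Eexp, Fintype.sum_bool, kerV_hard_two _ _ hπ]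
  have e1 : π 1 true true = 1 - π 1 true false := by linarith
  have e2 : π 2 true true = 1 - π 2 true false := by linarith
  have e3 : π 2 false true = 1 - π 2 false false := by linarith
  cases θ <;> simp [worstP, worstProb, hardP, hardVal, e1, e2, e3] <;> ring

lemma hardVal_le_kerV (θ : Bool) {p q ρ : ℝ} (hρ0 : 0 ≤ ρ) (hρ1 : ρ ≤ 1)
    (π : ℕ → Bool → Bool → ℝ) (hπ : IsPolicy 3 π) (Pk : ℕ → Bool → Bool → Bool → ℝ)
    (hPk : Admissible 3 (TVset ρ (hardP θ p q)) Pk) :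
    hardVal p q ρ (π 2 false θ) ≤ kerV 3 hardR Pk π 1 true := by
  obtain ⟨n1, h1⟩ := hπ 1 true (by norm_num) (by norm_num)
  obtain ⟨n2, h2⟩ := hπ 2 true (by norm_num) (by norm_num)
  obtain ⟨n3, h3⟩ := hπ 2 false (by norm_num) (by norm_num)
  simp only [Fintype.sum_bool] at h1 h2 h3
  have b := fun h s a k l => TVset_hard_bounds (hPk h s a k l)
  have good : 2 - ρ ≤ kerV 3 hardR Pk π 2 true := by
    rw [kerV_hard_two _ _ hπ]
    have bt := (b 2 true true (by norm_num) (by norm_num)).1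
    have bf := (b 2 true false (by norm_num) (by norm_num)).1
    simp [hardP] at bt bf ⊢
    nlinarith [mul_le_mul_of_nonneg_left bt (n2 true), mul_le_mul_of_nonneg_left bf (n2 false)]
  have bt := b 2 false true (by norm_num) (by norm_num)
  have bf := b 2 false false (by norm_num) (by norm_num)
  have bad_le : kerV 3 hardR Pk π 2 false ≤ 1 := by
    rw [kerV_hard_two _ _ hπ]
    simp only [Bool.false_eq_true, if_false]
    nlinarith [mul_le_mul_of_nonneg_left bt.2.1 (n3 true),
      mul_le_mul_of_nonneg_left bf.2.1 (n3 false)]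
  have bad : π 2 false θ * p + (1 - π 2 false θ) * q - ρ ≤ kerV 3 hardR Pk π 2 false := by
    rw [kerV_hard_two _ _ hπ]
    have mt := mul_le_mul_of_nonneg_left bt.1 (n3 true)
    have mf := mul_le_mul_of_nonneg_left bf.1 (n3 false)
    have e3 : π 2 false true = 1 - π 2 false false := by linarith
    cases θ <;> simp [hardP, e3] at mt mf ⊢ <;> linarith
  -- Since the good state is worth more, an adversary at step 1 spends the whole TV budget.
  have step : ∀ a, (1 - ρ) * (2 - ρ) + ρ * (π 2 false θ * p + (1 - π 2 false θ) * q - ρ)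
      ≤ Eexp (Pk 1 true a) (kerV 3 hardR Pk π 2) := by
    intro a
    obtain ⟨c1, c2, c3⟩ := b 1 true a (by norm_num) (by norm_num)
    simp [hardP] at c1
    simp only [Eexp, Fintype.sum_bool, c3]
    have t1 := mul_le_mul_of_nonneg_left good (sub_nonneg.2 hρ1)
    have t2 := mul_le_mul_of_nonneg_left bad hρ0
    have t3 : 0 ≤ (Pk 1 true a true - (1 - ρ))
        * (kerV 3 hardR Pk π 2 true - kerV 3 hardR Pk π 2 false) :=
      mul_nonneg (by linarith) (by linarith)
    linarith
  rw [kerV_hard_one _ _ hπ, hardVal]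
  have s1 := mul_le_mul_of_nonneg_left (step true) (n1 true)
  have s2 := mul_le_mul_of_nonneg_left (step false) (n1 false)
  have e1 : π 1 true true = 1 - π 1 true false := by linarith
  rw [e1] at s1 ⊢
  linarith

lemma robV_hard (θ : Bool) {p q ρ : ℝ} (hqp : q < p) (hp1 : p < 1)
    (hρ0 : 0 ≤ ρ) (hρq : ρ ≤ q) (π : ℕ → Bool → Bool → ℝ) (hπ : IsPolicy 3 π) :
    robV 3 hardR (TVset ρ (hardP θ p q)) π 1 true = hardVal p q ρ (π 2 false θ) := by
  refine IsLeast.csInf_eq ⟨⟨worstP θ p q ρ, worstP_admissible θ hqp hp1 hρ0 hρq,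
    (kerV_worstP θ p q ρ π hπ).symm⟩, ?_⟩
  rintro x ⟨Pk, hPk, rfl⟩
  exact hardVal_le_kerV θ hρ0 (by linarith) π hπ Pk hPk

lemma optV_hard (θ : Bool) {p q ρ : ℝ} (hqp : q < p) (hp1 : p < 1)
    (hρ0 : 0 ≤ ρ) (hρq : ρ ≤ q) :
    optV 3 hardR (TVset ρ (hardP θ p q)) 1 true = hardVal p q ρ 1 := by
  have hd : IsPolicy 3 (detPol fun _ _ => θ : ℕ → Bool → Bool → ℝ) := by
    intro h s _ _
    refine ⟨fun a => ?_, ?_⟩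
    · unfold detPol; split_ifs <;> norm_num
    · cases θ <;> simp [detPol]
  refine IsGreatest.csSup_eq ⟨⟨_, hd, ?_⟩, ?_⟩
  · rw [robV_hard θ hqp hp1 hρ0 hρq _ hd]; simp [detPol]
  · rintro x ⟨π, hπ, rfl⟩
    rw [robV_hard θ hqp hp1 hρ0 hρq _ hπ]
    obtain ⟨n, e⟩ := hπ 2 false (by norm_num) (by norm_num)
    have hx : π 2 false θ ≤ 1 := by
      rw [← e]; exact Finset.single_le_sum (fun a _ => n a) (Finset.mem_univ θ)
    have := mul_nonneg (mul_nonneg hρ0 (sub_nonneg.2 hqp.le)) (sub_nonneg.2 hx)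
    unfold hardVal
    linarith

/-- **Deterministic core of the hardness result.** For the pair of hard instances
`{M_0, M_1}` with `0 < q < p < 1` and TV robust sets of radius `ρ ∈ [0,q]`, any fixed
sequence of `K` Markov policies incurs, in the worse of the two instances, cumulative robust
suboptimality at least `ρ(p-q)K/2`. -/
theorem hard_example_lower_bound (p q ρ : ℝ)
    (hq0 : 0 < q) (hqp : q < p) (hp1 : p < 1) (hρ0 : 0 ≤ ρ) (hρq : ρ ≤ q)
    (K : ℕ) (hK : 1 ≤ K)
    (πs : Fin K → ℕ → Bool → Bool → ℝ) (hπs : ∀ k, IsPolicy 3 (πs k)) :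
    ρ * (p - q) * K / 2 ≤
      max
        (∑ k : Fin K,
          (optV 3 hardR (TVset ρ (hardP false p q)) 1 true
            - robV 3 hardR (TVset ρ (hardP false p q)) (πs k) 1 true))
        (∑ k : Fin K,
          (optV 3 hardR (TVset ρ (hardP true p q)) 1 true
            - robV 3 hardR (TVset ρ (hardP true p q)) (πs k) 1 true)) := by
  have hloss : ∀ θ k, optV 3 hardR (TVset ρ (hardP θ p q)) 1 true
      - robV 3 hardR (TVset ρ (hardP θ p q)) (πs k) 1 true
      = ρ * (p - q) * (1 - πs k 2 false θ) := by
    intro θ k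
    rw [optV_hard θ hqp hp1 hρ0 hρq, robV_hard θ hqp hp1 hρ0 hρq _ (hπs k)]
    unfold hardVal
    ring
  simp only [hloss]
  have hsum : (∑ k, ρ * (p - q) * (1 - πs k 2 false false))
      + ∑ k, ρ * (p - q) * (1 - πs k 2 false true) = ρ * (p - q) * K := by
    rw [← Finset.sum_add_distrib]
    have : ∀ k, ρ * (p - q) * (1 - πs k 2 false false)
        + ρ * (p - q) * (1 - πs k 2 false true) = ρ * (p - q) := by
      intro k
      have h := (hπs k 2 false (by norm_num) (by norm_num)).2
      simp only [Fintype.sum_bool] at h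
      linear_combination (-(ρ * (p - q))) * h
    simp [this, mul_comm]
  have := le_max_left (∑ k, ρ * (p - q) * (1 - πs k 2 false false))
    (∑ k, ρ * (p - q) * (1 - πs k 2 false true))
  have := le_max_right (∑ k, ρ * (p - q) * (1 - πs k 2 false false))
    (∑ k, ρ * (p - q) * (1 - πs k 2 false true))
  linarith
end

section
/- (Total variance law for RMDPs with TV robust sets.) Consider an RMDP whose robust sets are the TV robust sets of radius ρ ∈ (0,1). Let π be a deterministic Markov policy (π_h : S → A), and let T̃_h : S×A → Δ(S), h = 1,…,H, be kernels such that for all (s,a,h): T̃_h(·|s,a) ∈ 𝒫_ρ(s,a;P_h) and E_{T̃_h(·|s,a)}[V^π_{h+1}] = inf_{P ∈ 𝒫_ρ(s,a;P_h)} E_P[V^π_{h+1}] (i.e., T̃ attains the robust Bellman infimum for π). Assume in addition that max_{s∈S} V^π_h(s) ≤ min{H, 1/ρ} for every h ∈ {1,…,H}. Fix an initial state s₁ ∈ S and define occupancy distributions ν_1 := δ_{s₁} and ν_{h+1}(s') := ∑_{s∈S} ν_h(s)·T̃_h(s'|s, π_h(s)). Then ∑_{h=1}^H ∑_{s∈S}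 ν_h(s) · Var_{T̃_h(·|s,π_h(s))}[V^π_{h+1}] ≤ 2H·min{H, 1/ρ}. -/
/-!
The kernels `Tt` are admissible and attain the robust Bellman infimum at every step, so backward
induction on the stage shows that the robust value function is the ordinary value function under
`Tt` (`robV_eq_kerV`). Hence, writing `V` for it, `V_h(s) = r + E[V_{h+1}]` with a reward
`r ∈ [0,1]` and the expectation taken under `Tt`. With `V_h ≤ M := min H (1/ρ)` this gives
`V_h² - (E V_{h+1})² ≤ 2M`, that is, `Var[V_{h+1}] ≤ E[V_{h+1}²] - V_h² + 2M`.
Averaging over the occupancy measure `ν_h` turns the first two terms into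
`∑ ν_{h+1} V_{h+1}² - ∑ ν_h V_h²`, which telescopes, with last value `0` as `V_{H+1} = 0`.
-/

open Finset

/-- Variance of `f` under `p`. -/
noncomputable def Varp {S : Type*} [Fintype S] (p f : S → ℝ) : ℝ :=
  Eexp p (fun s => (f s) ^ 2) - (Eexp p f) ^ 2

section Helpers

variable {S A : Type*} [Fintype S] [Fintype A]

lemma Eexp_nonneg {p f : S → ℝ} (hp : IsDist p) (hf : ∀ s, 0 ≤ f s) : 0 ≤ Eexp p f :=
  Finset.sum_nonneg fun s _ => mul_nonneg (hp.1 s) (hf s)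

lemma kerV_last (H : ℕ) (R : ℕ → S → A → ℝ) (Pk : ℕ → S → A → S → ℝ)
    (π : ℕ → S → A → ℝ) (s : S) : kerV H R Pk π (H + 1) s = 0 := by
  rw [kerV]; simp

lemma kerV_step {H h : ℕ} (hh : h ≤ H) (R : ℕ → S → A → ℝ) (Pk : ℕ → S → A → S → ℝ)
    (πd : ℕ → S → A) (s : S) :
    kerV H R Pk (detPol πd) h s
      = R h s (πd h s) + Eexp (Pk h s (πd h s)) (kerV H R Pk (detPol πd) (h + 1)) := by
  rw [kerV, dif_neg (by omega)]
  classical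
  simp [detPol]

lemma kerV_nonneg {H : ℕ} {R : ℕ → S → A → ℝ}
    (hR : ∀ h s a, 1 ≤ h → h ≤ H → 0 ≤ R h s a ∧ R h s a ≤ 1)
    {Pk : ℕ → S → A → S → ℝ} (hPk : ∀ h s a, 1 ≤ h → h ≤ H → IsDist (Pk h s a))
    (πd : ℕ → S → A) {h : ℕ} (h1 : 1 ≤ h) (h2 : h ≤ H + 1) :
    ∀ s, 0 ≤ kerV H R Pk (detPol πd) h s := by
  induction h2 using Nat.decreasingInduction with
  | self => intro s; rw [kerV_last]
  | of_succ k hk ih =>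
    intro s
    rw [kerV_step (by omega)]
    exact add_nonneg (hR k s _ h1 (by omega)).1
      (Eexp_nonneg (hPk k s _ h1 (by omega)) (ih (by omega)))

/-- Kernels attaining the robust Bellman infimum at every stage are a worst-case choice:
the robust value function is the value function under them. -/
lemma robV_eq_kerV {H : ℕ} {ρ : ℝ} {R : ℕ → S → A → ℝ}
    (hR : ∀ h s a, 1 ≤ h → h ≤ H → 0 ≤ R h s a ∧ R h s a ≤ 1)
    {P : ℕ → S → A → S → ℝ} {πd : ℕ → S → A} {Tt : ℕ → S → A → S → ℝ}
    (hTmem : ∀ h s a, 1 ≤ h → h ≤ H → Tt h s a ∈ TVset ρ P h s a)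
    (hTinf : ∀ h s a, 1 ≤ h → h ≤ H →
      Eexp (Tt h s a) (robV H R (TVset ρ P) (detPol πd) (h + 1))
        = sInf {x : ℝ | ∃ Pt ∈ TVset ρ P h s a,
            x = Eexp Pt (robV H R (TVset ρ P) (detPol πd) (h + 1))})
    {h : ℕ} (h1 : 1 ≤ h) (h2 : h ≤ H + 1) :
    robV H R (TVset ρ P) (detPol πd) h = kerV H R Tt (detPol πd) h := by
  have hbdd : ∀ k, 1 ≤ k → k ≤ H + 1 → ∀ s, BddBelow {x : ℝ | ∃ Pk : ℕ → S → A → S → ℝ,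
      Admissible H (TVset ρ P) Pk ∧ x = kerV H R Pk (detPol πd) k s} := by
    rintro k hk1 hk2 s
    refine ⟨0, ?_⟩
    rintro x ⟨Pk, hPk, rfl⟩
    exact kerV_nonneg hR (fun h s a h1 h2 => (hPk h s a h1 h2).1) πd hk1 hk2 s
  induction h2 using Nat.decreasingInduction with
  | self =>
    funext s
    refine le_antisymm (csInf_le (hbdd _ h1 le_rfl s) ⟨Tt, hTmem, rfl⟩)
      (le_csInf ⟨_, Tt, hTmem, rfl⟩ ?_)
    rintro x ⟨Pk, hPk, rfl⟩
    simp only [kerV_last, le_refl]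
  | of_succ k hk ih =>
    have ih := ih (by omega)
    funext s
    refine le_antisymm (csInf_le (hbdd _ h1 (by omega) s) ⟨Tt, hTmem, rfl⟩)
      (le_csInf ⟨_, Tt, hTmem, rfl⟩ ?_)
    rintro x ⟨Pk, hPk, rfl⟩
    rw [kerV_step (by omega), kerV_step (by omega), ← ih, hTinf k s _ h1 (by omega)]
    have hnn : ∀ s, 0 ≤ robV H R (TVset ρ P) (detPol πd) (k + 1) s := by
      rw [ih]
      exact kerV_nonneg hR (fun h s a h1 h2 => (hTmem h s a h1 h2).1) πd (by omega) (by omega)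
    have hmem := hPk k s (πd k s) h1 (by omega)
    refine add_le_add le_rfl (le_trans (csInf_le ?_ ⟨_, hmem, rfl⟩) (Eexp_mono hmem.1 ?_))
    · refine ⟨0, ?_⟩
      rintro x ⟨Pt, hPt, rfl⟩
      exact Eexp_nonneg hPt.1 hnn
    · intro s'
      exact csInf_le (hbdd _ (by omega) (by omega) s') ⟨Pk, hPk, rfl⟩

end Helpers

open Classical in
/-- **Total variance law for RMDPs with TV robust sets.** Let `π` be a deterministic policy,
let `T̃` be kernels attaining the robust Bellman infimum for `π` within the TV robust sets,
assume `max_s V^π_h(s) ≤ min{H,1/ρ}` for every `h ∈ {1,…,H}`, and let `ν` be the occupancy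
sequence of `π` under `T̃` started at `s₁`. Then
`∑_{h=1}^H ∑_s ν_h(s)·Var_{T̃_h(·|s,π_h(s))}[V^π_{h+1}] ≤ 2H·min{H,1/ρ}`. -/
theorem total_variance_law {S A : Type*} [Fintype S] [Fintype A] [Nonempty S] [Nonempty A]
    (H : ℕ) (hH : 1 ≤ H) (ρ : ℝ) (hρ0 : 0 < ρ) (hρ1 : ρ < 1)
    (R : ℕ → S → A → ℝ) (hR : ∀ h s a, 1 ≤ h → h ≤ H → 0 ≤ R h s a ∧ R h s a ≤ 1)
    (P : ℕ → S → A → S → ℝ) (hP : ∀ h s a, 1 ≤ h → h ≤ H → IsDist (P h s a))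
    (πd : ℕ → S → A)
    (Tt : ℕ → S → A → S → ℝ)
    (hTmem : ∀ h s a, 1 ≤ h → h ≤ H → Tt h s a ∈ TVset ρ P h s a)
    (hTinf : ∀ h s a, 1 ≤ h → h ≤ H →
      Eexp (Tt h s a) (robV H R (TVset ρ P) (detPol πd) (h + 1))
        = sInf {x : ℝ | ∃ Pt ∈ TVset ρ P h s a,
            x = Eexp Pt (robV H R (TVset ρ P) (detPol πd) (h + 1))})
    (hVbound : ∀ h, 1 ≤ h → h ≤ H → ∀ s : S,
      robV H R (TVset ρ P) (detPol πd) h s ≤ min (H : ℝ) (1 / ρ))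
    (s₁ : S) (ν : ℕ → S → ℝ)
    (hν1 : ∀ s, ν 1 s = if s = s₁ then 1 else 0)
    (hνrec : ∀ h, 1 ≤ h → h + 1 ≤ H → ∀ s',
      ν (h + 1) s' = ∑ s : S, ν h s * Tt h s (πd h s) s') :
    ∑ h ∈ Finset.Icc 1 H, ∑ s : S,
        ν h s * Varp (Tt h s (πd h s)) (robV H R (TVset ρ P) (detPol πd) (h + 1))
      ≤ 2 * H * min (H : ℝ) (1 / ρ) := by
  set V := robV H R (TVset ρ P) (detPol πd) with hV
  set M := min (H : ℝ) (1 / ρ) with hM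
  have hVk : ∀ h, 1 ≤ h → h ≤ H + 1 → V h = kerV H R Tt (detPol πd) h :=
    fun h h1 h2 => robV_eq_kerV hR hTmem hTinf h1 h2
  have hTd : ∀ h s a, 1 ≤ h → h ≤ H → IsDist (Tt h s a) :=
    fun h s a h1 h2 => (hTmem h s a h1 h2).1
  have hVnn : ∀ h, 1 ≤ h → h ≤ H + 1 → ∀ s, 0 ≤ V h s := by
    intro h h1 h2
    rw [hVk h h1 h2]
    exact kerV_nonneg hR hTd πd h1 h2
  have hVlast : ∀ s, V (H + 1) s = 0 := by
    intro s
    rw [hVk (H + 1) (by omega) le_rfl, kerV_last]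
  have hBell : ∀ h, 1 ≤ h → h ≤ H → ∀ s,
      V h s = R h s (πd h s) + Eexp (Tt h s (πd h s)) (V (h + 1)) := by
    intro h h1 h2 s
    rw [hVk h h1 (by omega), hVk (h + 1) (by omega) (by omega), kerV_step h2]
  have hνd : ∀ h, 1 ≤ h → h ≤ H → IsDist (ν h) := by
    intro h h1
    induction h, h1 using Nat.le_induction with
    | base =>
      intro _
      refine ⟨fun s => ?_, ?_⟩
      · rw [hν1]; split_ifs <;> norm_num
      · simp [hν1]
    | succ k hk ih =>
      intro hkH
      have ih := ih (by omega)
      refine ⟨fun s => ?_, ?_⟩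
      · rw [hνrec k hk hkH]
        exact Finset.sum_nonneg fun s' _ =>
          mul_nonneg (ih.1 s') ((hTd k s' _ hk (by omega)).1 s)
      · simp only [hνrec k hk hkH]
        rw [Finset.sum_comm]
        simp only [← Finset.mul_sum, (hTd k _ _ hk (by omega : k ≤ H)).2, mul_one, ih.2]
  -- The potential whose increments dominate the expected variances up to `2M`.
  set g : ℕ → ℝ := fun h => ∑ s, ν h s * V h s ^ 2 with hg
  have hpush : ∀ h, 1 ≤ h → h ≤ H →
      ∑ s, ν h s * Eexp (Tt h s (πd h s)) (fun s' => V (h + 1) s' ^ 2) = g (h + 1) := by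
    intro h h1 h2
    -- `ν (H + 1)` is unconstrained, but at that stage both sides vanish with `V (H + 1)`.
    rcases h2.eq_or_lt with rfl | hlt
    · simp [hg, Eexp, hVlast]
    · simp only [hg, Eexp, hνrec h h1 hlt, Finset.mul_sum, Finset.sum_mul]
      rw [Finset.sum_comm]
      simp only [mul_assoc]
  have hstep : ∀ h ∈ Finset.Icc 1 H,
      ∑ s, ν h s * Varp (Tt h s (πd h s)) (V (h + 1)) ≤ (g (h + 1) - g h) + 2 * M := by
    intro h hh
    obtain ⟨h1, h2⟩ := Finset.mem_Icc.mp hh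
    have hd := hνd h h1 h2
    have hpt : ∀ s, Varp (Tt h s (πd h s)) (V (h + 1))
        ≤ Eexp (Tt h s (πd h s)) (fun s' => V (h + 1) s' ^ 2) - V h s ^ 2 + 2 * M := by
      intro s
      have hE : 0 ≤ Eexp (Tt h s (πd h s)) (V (h + 1)) :=
        Eexp_nonneg (hTd h s _ h1 h2) (hVnn (h + 1) (by omega) (by omega))
      have hb := hBell h h1 h2 s
      have hr := hR h s (πd h s) h1 h2
      have hm : V h s ≤ M := hVbound h h1 h2 s
      have h0 := hVnn h h1 (by omega) s
      unfold Varp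
      -- `V² - E² = r (V + E)` with `r = V - E ∈ [0,1]` and `E ≤ V ≤ M`.
      nlinarith [mul_le_mul_of_nonneg_right hr.2 (add_nonneg h0 hE)]
    calc ∑ s, ν h s * Varp (Tt h s (πd h s)) (V (h + 1))
        ≤ ∑ s, ν h s * (Eexp (Tt h s (πd h s)) (fun s' => V (h + 1) s' ^ 2)
            - V h s ^ 2 + 2 * M) :=
          Finset.sum_le_sum fun s _ => mul_le_mul_of_nonneg_left (hpt s) (hd.1 s)
      _ = (g (h + 1) - g h) + 2 * M := by
          rw [← hpush h h1 h2]
          simp only [hg, mul_add, mul_sub, Finset.sum_add_distrib, Finset.sum_sub_distrib]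
          rw [← Finset.sum_mul, hd.2, one_mul]
  have hg1 : 0 ≤ g 1 :=
    Finset.sum_nonneg fun s _ => mul_nonneg ((hνd 1 le_rfl hH).1 s) (sq_nonneg _)
  have hglast : g (H + 1) = 0 := by simp [hg, hVlast]
  have htel : ∑ h ∈ Finset.Icc 1 H, (g (h + 1) - g h) = g (H + 1) - g 1 := by
    have hI : Finset.Icc 1 H = Finset.Ico 1 (H + 1) := by
      ext x; simp only [Finset.mem_Icc, Finset.mem_Ico]; omega
    rw [hI, Finset.sum_Ico_sub g (by omega)]
  calc _ ≤ ∑ h ∈ Finset.Icc 1 H, ((g (h + 1) - g h) + 2 * M) := Finset.sum_le_sum hstep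
    _ = g (H + 1) - g 1 + 2 * H * M := by
        rw [Finset.sum_add_distrib, htel]
        simp only [Finset.sum_const, Nat.card_Icc, nsmul_eq_mul, Nat.add_sub_cancel]
        ring
    _ ≤ 2 * H * M := by linarith
end
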